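/- Let (α, β) be an admissible and non-null pair, and assume there is no x ∈ (0,1) such that π_x(α) = π_x(β). Then for every a ∈ (1,2] there exists p with 1 − 1/a ≤ p ≤ 1/a such that Ω_{(α,β,+)} ⊆ Ω_{(a,p,+)}, where Ω_{(a,p,+)} = τ_{(a,p,+)}([0,1]) is the address space of the uniform overlapping function f_{(a,p,+)}. -/

import Mathlib

/-!
Write `P_x(ω) = ∑ ω_k x^k`, so that `π_x = (1 - x) P_x`, and let `X` be the shift-invariant set of
strings none of whose shifts lies in the open interval `(α, β)`. It contains `α`, `β` and
`Ω_{(α,β,+)}`. A string of `X` starting with `0` is `≼ α`, and one starting with `1` is `≽ β`.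

Call `x` *separating* if `P_x σ ≤ P_x ω` for all `σ, ω ∈ X` with `σ₀ = 0` and `ω₀ = 1`. Comparing
two strings from their first difference on shows that `P_x` is then weakly increasing on `X`, so
the strings starting with `0` have values at most `P_x α`, those starting with `1` at least `P_x β`
(`le_alpha`, `beta_le`).

By the intermediate value theorem, and since `P_0 α = 0 < 1 = P_0 β`, the absence of a solution of
`π_x α = π_x β` in `(0,1)` gives `P_x α < P_x β` on `(0,1)` (`P_alpha_lt_beta`). Thus at a
separating `x` the weak inequality improves to a gap bounded below by `P_x β - P_x α > 0`, and such
a gap survives a small increase of `x`. The separating parameters are also closed in `[1/2, b]` and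
contain `1/2`, so every `x ∈ [1/2, 1)` is separating (`sep_of_le`).

For `x = 1/a`, `P_x` is then strictly increasing on `X`. With `p = max (π_x α) (1 - x)`, every
`ω ∈ Ω_{(α,β,+)}` is the itinerary of the point `π_x ω`: the map `f_{(a,p,+)}` acts on these points
as the shift, and the first digit of a shift decides on which side of `p` its projection lies.
-/

open Filter Set

/-- The space of infinite binary strings. -/
abbrev Omega := ℕ → Bool

/-- Numerical value of a bit. -/
def b2r (b : Bool) : ℝ := if b then 1 else 0

/-- The projection map `π_x(ω) = (1-x) ∑ ω_k x^k`. -/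
noncomputable def proj (x : ℝ) (ω : Omega) : ℝ := (1 - x) * ∑' k : ℕ, b2r (ω k) * x ^ k

/-- The shift map. -/
def shift (ω : Omega) : Omega := fun n => ω (n + 1)

/-- Strict lexicographic order on binary strings. -/
def lexLt (σ ω : Omega) : Prop := ∃ k : ℕ, (∀ i < k, σ i = ω i) ∧ σ k = false ∧ ω k = true

/-- Lexicographic order on binary strings. -/
def lexLe (σ ω : Omega) : Prop := σ = ω ∨ lexLt σ ω

/-- An admissible pair of binary strings. -/
def admissible (α β : Omega) : Prop :=
  α 0 = false ∧ α 1 = true ∧ β 0 = true ∧ β 1 = false ∧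
  (∀ n : ℕ, ¬ (lexLt α (shift^[n] α) ∧ lexLe (shift^[n] α) β)) ∧
  (∀ n : ℕ, ¬ (lexLe α (shift^[n] β) ∧ lexLt (shift^[n] β) β))

/-- The address space `Ω_{(α,β,-)}`. -/
def addrMinus (α β : Omega) : Set Omega :=
  {ω | ∀ n : ℕ, ¬ (lexLt α (shift^[n] ω) ∧ lexLe (shift^[n] ω) β)}

/-- The address space `Ω_{(α,β,+)}`. -/
def addrPlus (α β : Omega) : Set Omega :=
  {ω | ∀ n : ℕ, ¬ (lexLe α (shift^[n] ω) ∧ lexLt (shift^[n] ω) β)}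

/-- The address space `Ω_{(α,β)}`. -/
def addr (α β : Omega) : Set Omega := addrMinus α β ∪ addrPlus α β

/-- The exponential growth rate `h(Γ) = limsup (1/n) ln |Γ_n|`, where `Γ_n` is the set of
length-`(n+1)` prefixes of members of `Γ`. -/
noncomputable def growthRate (Γ : Set Omega) : ℝ :=
  Filter.limsup
    (fun n : ℕ => Real.log ((fun ω : Omega => fun i : Fin (n + 1) => ω i.val) '' Γ).ncard / n)
    Filter.atTop

/-- The uniform overlapping function `f_{(a,p,-)}`. -/
noncomputable def fMinus (a p : ℝ) : ℝ → ℝ := fun x => if x ≤ p then a * x else a * x + (1 - a)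

/-- The uniform overlapping function `f_{(a,p,+)}`. -/
noncomputable def fPlus (a p : ℝ) : ℝ → ℝ := fun x => if x < p then a * x else a * x + (1 - a)

/-- The itinerary map `τ_{(a,p,-)}`: the `n`-th bit is `1` iff `f^n(x) ∈ I₁ = (p,1]`. -/
noncomputable def itinMinus (a p x : ℝ) : Omega := fun n => decide (p < (fMinus a p)^[n] x)

/-- The itinerary map `τ_{(a,p,+)}`: the `n`-th bit is `1` iff `f^n(x) ∈ I₁ = [p,1]`. -/
noncomputable def itinPlus (a p x : ℝ) : Omega := fun n => decide (p ≤ (fPlus a p)^[n] x)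

/-! ### Strings and the lexicographic order -/

lemma shift_iter (n : ℕ) (ω : Omega) : shift^[n] ω = fun k => ω (k + n) := by
  induction n generalizing ω with
  | zero => rfl
  | succ n ih =>
    rw [Function.iterate_succ_apply, ih]
    funext k
    simp only [shift]
    congr 1

lemma lexLt_or_of_ne {σ ω : Omega} (hne : σ ≠ ω) : lexLt σ ω ∨ lexLt ω σ := by
  classical
  have hex : ∃ k, σ k ≠ ω k := Function.ne_iff.mp hne
  have hmin : ∀ i < Nat.find hex, σ i = ω i := fun i hi => by
    simpa using Nat.find_min hex hi
  have hk := Nat.find_spec hex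
  rcases hσ : σ (Nat.find hex) with _ | _
  · left
    refine ⟨_, hmin, hσ, ?_⟩
    rcases hω : ω (Nat.find hex) with _ | _
    · exact absurd (hσ.trans hω.symm) hk
    · rfl
  · right
    refine ⟨_, fun i hi => (hmin i hi).symm, ?_, hσ⟩
    rcases hω : ω (Nat.find hex) with _ | _
    · rfl
    · exact absurd (hσ.trans hω.symm) hk

lemma lexLt_of_head {σ ω : Omega} (hσ : σ 0 = false) (hω : ω 0 = true) : lexLt σ ω :=
  ⟨0, fun i hi => absurd hi (Nat.not_lt_zero i), hσ, hω⟩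

/-- The set `X` of strings none of whose shifts lies in the open interval `(α, β)`. -/
def gapSet (α β : Omega) : Set Omega :=
  {ω | ∀ n : ℕ, ¬ (lexLt α (shift^[n] ω) ∧ lexLt (shift^[n] ω) β)}

lemma gapSet_shift {α β ω : Omega} (hω : ω ∈ gapSet α β) (k : ℕ) :
    shift^[k] ω ∈ gapSet α β := by
  intro n
  rw [← Function.iterate_add_apply]
  exact hω (n + k)

lemma addrPlus_subset (α β : Omega) : addrPlus α β ⊆ gapSet α β :=
  fun _ hω n hn => hω n ⟨Or.inr hn.1, hn.2⟩

lemma alpha_mem {α β : Omega} (hadm : admissible α β) : α ∈ gapSet α β :=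
  fun n hn => hadm.2.2.2.2.1 n ⟨hn.1, Or.inr hn.2⟩

lemma beta_mem {α β : Omega} (hadm : admissible α β) : β ∈ gapSet α β :=
  fun n hn => hadm.2.2.2.2.2 n ⟨Or.inr hn.1, hn.2⟩

/-! ### The power series of a string -/

/-- The power series `P_x(ω) = ∑ ω_k x^k`, so that `π_x = (1 - x) P_x`. -/
noncomputable def P (x : ℝ) (ω : Omega) : ℝ := ∑' k : ℕ, b2r (ω k) * x ^ k

lemma b2r_nonneg (b : Bool) : 0 ≤ b2r b := by cases b <;> simp [b2r]

lemma b2r_le_one (b : Bool) : b2r b ≤ 1 := by cases b <;> simp [b2r]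

lemma P_summable {x : ℝ} (h0 : 0 ≤ x) (h1 : x < 1) (ω : Omega) :
    Summable (fun k : ℕ => b2r (ω k) * x ^ k) :=
  Summable.of_nonneg_of_le (fun k => mul_nonneg (b2r_nonneg _) (pow_nonneg h0 k))
    (fun k => mul_le_of_le_one_left (pow_nonneg h0 k) (b2r_le_one _))
    (summable_geometric_of_lt_one h0 h1)

lemma P_nonneg {x : ℝ} (h0 : 0 ≤ x) (ω : Omega) : 0 ≤ P x ω :=
  tsum_nonneg fun k => mul_nonneg (b2r_nonneg _) (pow_nonneg h0 k)

lemma P_le {x : ℝ} (h0 : 0 ≤ x) (h1 : x < 1) (ω : Omega) : P x ω ≤ (1 - x)⁻¹ := by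
  rw [← tsum_geometric_of_lt_one h0 h1]
  exact (P_summable h0 h1 ω).tsum_le_tsum
    (fun k => mul_le_of_le_one_left (pow_nonneg h0 k) (b2r_le_one _))
    (summable_geometric_of_lt_one h0 h1)

lemma P_succ {x : ℝ} (h0 : 0 ≤ x) (h1 : x < 1) (ω : Omega) :
    P x ω = b2r (ω 0) + x * P x (shift ω) := by
  unfold P
  rw [(P_summable h0 h1 ω).tsum_eq_zero_add, ← tsum_mul_left]
  simp only [pow_zero, mul_one, shift]
  congr 1
  exact tsum_congr fun k => by ring

lemma P_head_false {x : ℝ} (h0 : 0 ≤ x) (h1 : x < 1) {ω : Omega} (hω : ω 0 = false) :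
    P x ω ≤ x * (1 - x)⁻¹ := by
  rw [P_succ h0 h1, hω]
  simpa [b2r] using mul_le_mul_of_nonneg_left (P_le h0 h1 (shift ω)) h0

lemma P_head_true {x : ℝ} (h0 : 0 ≤ x) (h1 : x < 1) {ω : Omega} (hω : ω 0 = true) :
    1 ≤ P x ω := by
  rw [P_succ h0 h1, hω]
  simpa [b2r] using mul_nonneg h0 (P_nonneg h0 (shift ω))

lemma P_sub_of_agree {x : ℝ} (h0 : 0 ≤ x) (h1 : x < 1) (k : ℕ) (σ ω : Omega)
    (hag : ∀ i < k, σ i = ω i) :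
    P x ω - P x σ = x ^ k * (P x (shift^[k] ω) - P x (shift^[k] σ)) := by
  induction k generalizing σ ω with
  | zero => simp
  | succ k ih =>
    have := ih (shift σ) (shift ω) (fun i hi => hag (i + 1) (by omega))
    rw [P_succ h0 h1 ω, P_succ h0 h1 σ, hag 0 (by omega), Function.iterate_succ_apply,
      Function.iterate_succ_apply, pow_succ]
    linear_combination x * this

lemma P_continuousOn {b : ℝ} (hb0 : 0 ≤ b) (hb : b < 1) (ω : Omega) :
    ContinuousOn (fun x => P x ω) (Icc 0 b) := by
  unfold P
  refine continuousOn_tsum (u := fun k => b ^ k) (fun k => by fun_prop)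
    (summable_geometric_of_lt_one hb0 hb) ?_
  intro k x hx
  rw [Real.norm_of_nonneg (mul_nonneg (b2r_nonneg _) (pow_nonneg hx.1 k))]
  exact (mul_le_of_le_one_left (pow_nonneg hx.1 k) (b2r_le_one _)).trans
    (pow_le_pow_left₀ hx.1 hx.2 k)

lemma P_mono {x y : ℝ} (h0 : 0 ≤ x) (hxy : x ≤ y) (h1 : y < 1) (ω : Omega) :
    P x ω ≤ P y ω :=
  (P_summable h0 (hxy.trans_lt h1) ω).tsum_le_tsum
    (fun k => mul_le_mul_of_nonneg_left (pow_le_pow_left₀ h0 hxy k) (b2r_nonneg _))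
    (P_summable (h0.trans hxy) h1 ω)

/-- A bound on the growth of `P_x(ω)` in `x` that is uniform in `ω`: the complementary string has
an increasing power series too, and the two series add up to the geometric series. -/
lemma P_growth {x y : ℝ} (h0 : 0 ≤ x) (hxy : x ≤ y) (h1 : y < 1) (ω : Omega) :
    P y ω - P x ω ≤ (1 - y)⁻¹ - (1 - x)⁻¹ := by
  have hc : ∀ z : ℝ, 0 ≤ z → z < 1 → P z ω + P z (fun k => !ω k) = (1 - z)⁻¹ := by
    intro z hz0 hz1
    unfold P
    rw [← (P_summable hz0 hz1 ω).tsum_add (P_summable hz0 hz1 _),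
      ← tsum_geometric_of_lt_one hz0 hz1]
    refine tsum_congr fun k => ?_
    cases ω k <;> simp [b2r]
  have := P_mono h0 hxy h1 (fun k => !ω k)
  linarith [hc x h0 (hxy.trans_lt h1), hc y (h0.trans hxy) h1]

lemma P_alpha_lt_beta {α β : Omega} (hα : α 0 = false) (hβ : β 0 = true)
    (h : ¬ ∃ x ∈ Set.Ioo (0 : ℝ) 1, proj x α = proj x β) {b : ℝ} (hb0 : 0 < b) (hb : b < 1) :
    P b α < P b β := by
  by_contra! hle
  have hP0 : ∀ ω : Omega, P 0 ω = b2r (ω 0) := fun ω => by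
    rw [P_succ le_rfl one_pos]; simp
  have hcont : ContinuousOn (fun x => P x β - P x α) (Icc 0 b) :=
    (P_continuousOn hb0.le hb β).sub (P_continuousOn hb0.le hb α)
  have hmem : (0 : ℝ) ∈ Icc (P b β - P b α) (P 0 β - P 0 α) := by
    rw [hP0, hP0, hα, hβ]
    exact ⟨by linarith, by simp [b2r]⟩
  obtain ⟨x, hx, hx0⟩ := intermediate_value_Icc' hb0.le hcont hmem
  have hx0 : P x β - P x α = 0 := hx0
  have hxne : x ≠ 0 := by
    rintro rfl
    rw [hP0, hP0, hα, hβ] at hx0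
    simp [b2r] at hx0
  refine h ⟨x, ⟨lt_of_le_of_ne hx.1 hxne.symm, hx.2.trans_lt hb⟩, ?_⟩
  change (1 - x) * P x α = (1 - x) * P x β
  rw [sub_eq_zero.mp hx0]

/-! ### Separating parameters -/

/-- `x` is separating if `P_x` takes smaller values on the strings of `X` starting with `0` than on
those starting with `1`, equality being allowed. -/
def Separating (α β : Omega) (x : ℝ) : Prop :=
  ∀ σ ∈ gapSet α β, ∀ ω ∈ gapSet α β, σ 0 = false → ω 0 = true → P x σ ≤ P x ω

lemma Separating.mono {α β : Omega} {x : ℝ} (hx : Separating α β x) (h0 : 0 ≤ x) (h1 : x < 1)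
    {σ ω : Omega} (hσ : σ ∈ gapSet α β) (hω : ω ∈ gapSet α β) (hlt : lexLt σ ω) :
    P x σ ≤ P x ω := by
  obtain ⟨k, hag, hk0, hk1⟩ := hlt
  have hs := hx _ (gapSet_shift hσ k) _ (gapSet_shift hω k)
    (by rw [shift_iter]; simpa using hk0) (by rw [shift_iter]; simpa using hk1)
  have := mul_nonneg (pow_nonneg h0 k) (sub_nonneg.mpr hs)
  linarith [P_sub_of_agree h0 h1 k σ ω hag]

lemma Separating.le_alpha {α β : Omega} (hadm : admissible α β) {x : ℝ} (hx : Separating α β x)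
    (h0 : 0 ≤ x) (h1 : x < 1) {σ : Omega} (hσ : σ ∈ gapSet α β) (hσ0 : σ 0 = false) :
    P x σ ≤ P x α := by
  by_cases hne : σ = α
  · rw [hne]
  rcases lexLt_or_of_ne hne with hlt | hlt
  · exact hx.mono h0 h1 hσ (alpha_mem hadm) hlt
  · exact absurd ⟨hlt, lexLt_of_head hσ0 hadm.2.2.1⟩ (hσ 0)

lemma Separating.beta_le {α β : Omega} (hadm : admissible α β) {x : ℝ} (hx : Separating α β x)
    (h0 : 0 ≤ x) (h1 : x < 1) {ω : Omega} (hω : ω ∈ gapSet α β) (hω0 : ω 0 = true) :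
    P x β ≤ P x ω := by
  by_cases hne : ω = β
  · rw [hne]
  rcases lexLt_or_of_ne hne with hlt | hlt
  · exact absurd ⟨lexLt_of_head hadm.1 hω0, hlt⟩ (hω 0)
  · exact hx.mono h0 h1 (beta_mem hadm) hω hlt

lemma Separating.strictMono {α β : Omega} (hadm : admissible α β) {x : ℝ} (hx : Separating α β x)
    (h0 : 0 < x) (h1 : x < 1) (hgap : P x α < P x β)
    {σ ω : Omega} (hσ : σ ∈ gapSet α β) (hω : ω ∈ gapSet α β) (hlt : lexLt σ ω) :
    P x σ < P x ω := by
  obtain ⟨k, hag, hk0, hk1⟩ := hlt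
  have h2 := hx.le_alpha hadm h0.le h1 (gapSet_shift hσ k)
    (by rw [shift_iter]; simpa using hk0)
  have h3 := hx.beta_le hadm h0.le h1 (gapSet_shift hω k)
    (by rw [shift_iter]; simpa using hk1)
  have := mul_pos (pow_pos h0 k) (sub_pos.mpr (h2.trans_lt (hgap.trans_le h3)))
  linarith [P_sub_of_agree h0.le h1 k σ ω hag]

/-- Continuous induction on `[1/2, b]`: the separating parameters form a closed set which contains
`1/2` and, with each point, a right neighbourhood of it. -/
lemma sep_of_le {α β : Omega} (hadm : admissible α β)
    (h : ¬ ∃ x ∈ Set.Ioo (0 : ℝ) 1, proj x α = proj x β) {b : ℝ} (hb2 : 1 / 2 ≤ b) (hb : b < 1) :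
    Separating α β b := by
  have hsub : Icc (1 / 2 : ℝ) b ⊆ Icc 0 b := Icc_subset_Icc_left (by norm_num)
  have hcont : ∀ ω : Omega, ContinuousOn (fun x => P x ω) (Icc (1 / 2) b) := fun ω =>
    (P_continuousOn (by linarith) hb ω).mono hsub
  have hclosed : IsClosed ({x | Separating α β x} ∩ Icc (1 / 2) b) := by
    have heq : {x | Separating α β x} ∩ Icc (1 / 2) b =
        Icc (1 / 2) b ∩ ⋂ (σ : Omega) (ω : Omega) (_ : σ ∈ gapSet α β ∧ ω ∈ gapSet α β ∧
          σ 0 = false ∧ ω 0 = true), {x | x ∈ Icc (1 / 2 : ℝ) b ∧ P x σ ≤ P x ω} := by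
      ext x
      simp only [mem_inter_iff, mem_ofPred_eq, mem_iInter]
      constructor
      · rintro ⟨hs, hx⟩
        exact ⟨hx, fun σ ω hh => ⟨hx, hs σ hh.1 ω hh.2.1 hh.2.2.1 hh.2.2.2⟩⟩
      · rintro ⟨hx, hs⟩
        exact ⟨fun σ h1 ω h2 h3 h4 => (hs σ ω ⟨h1, h2, h3, h4⟩).2, hx⟩
    rw [heq]
    exact isClosed_Icc.inter <| isClosed_iInter fun σ => isClosed_iInter fun ω =>
      isClosed_iInter fun _ => isClosed_Icc.isClosed_le (hcont σ) (hcont ω)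
  have hhalf : Separating α β (1 / 2) := fun σ _ ω _ hσ0 hω0 => by
    have h1 := P_head_false (x := 1 / 2) (by norm_num) (by norm_num) hσ0
    have h2 := P_head_true (x := 1 / 2) (by norm_num) (by norm_num) hω0
    norm_num at h1 h2 ⊢
    linarith
  refine hclosed.Icc_subset_of_forall_mem_nhdsWithin (a := 1 / 2) (b := b) hhalf ?_ ⟨hb2, le_rfl⟩
  rintro x ⟨hx, hx2, hxb⟩
  have hx0 : 0 < x := by linarith
  have hx1 : x < 1 := hxb.trans hb
  have hgap := P_alpha_lt_beta hadm.1 hadm.2.2.1 h hx0 hx1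
  -- Increasing `x` to `y` costs at most `(1-y)⁻¹ - (1-x)⁻¹` of the gap `P_x β - P_x α`.
  have hev : ∀ᶠ y in nhds x, (1 - y)⁻¹ < (1 - x)⁻¹ + (P x β - P x α) := by
    have hc : ContinuousAt (fun y : ℝ => (1 - y)⁻¹) x :=
      ContinuousAt.inv₀ (by fun_prop) (by linarith)
    exact hc.eventually_lt continuousAt_const (by linarith)
  filter_upwards [hev.filter_mono nhdsWithin_le_nhds, self_mem_nhdsWithin,
    (eventually_lt_nhds hx1).filter_mono nhdsWithin_le_nhds] with y hy hxy hy1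
  intro σ hσ ω hω hσ0 hω0
  have hxy : x ≤ y := le_of_lt hxy
  have e1 := hx.le_alpha hadm hx0.le hx1 hσ hσ0
  have e2 := hx.beta_le hadm hx0.le hx1 hω hω0
  linarith [P_growth hx0.le hxy hy1 σ, P_mono hx0.le hxy hy1 ω]

/-! ### Itineraries -/

/-- If (α,β) is admissible, non-null, and no x ∈ (0,1) satisfies π_x α = π_x β, then for every
a ∈ (1,2] there is p ∈ [1-1/a, 1/a] with Ω_{(α,β,+)} ⊆ Ω_{(a,p,+)} = τ_{(a,p,+)}([0,1]). -/
theorem stmt13 (α β : Omega) (hadm : admissible α β) (hnn : 0 < growthRate (addr α β))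
    (h : ¬ ∃ x ∈ Set.Ioo (0 : ℝ) 1, proj x α = proj x β) :
    ∀ a : ℝ, 1 < a → a ≤ 2 → ∃ p : ℝ, 1 - 1 / a ≤ p ∧ p ≤ 1 / a ∧
      addrPlus α β ⊆ (fun x => itinPlus a p x) '' Set.Icc (0 : ℝ) 1 := by
  intro a ha1 ha2
  obtain ⟨x, hxdef⟩ : ∃ x : ℝ, x = 1 / a := ⟨_, rfl⟩
  have hax : a * x = 1 := by rw [hxdef]; field_simp
  have hx2 : 1 / 2 ≤ x := by
    rw [hxdef]; exact one_div_le_one_div_of_le (by linarith) ha2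
  have hx1 : x < 1 := by
    rw [hxdef, div_lt_one (by linarith)]; exact ha1
  have hx0 : 0 < x := by linarith
  have hsep := sep_of_le hadm h hx2 hx1
  have hgap := P_alpha_lt_beta hadm.1 hadm.2.2.1 h hx0 hx1
  have h1x : 0 < 1 - x := by linarith
  have hmul : ∀ ω, proj x ω = (1 - x) * P x ω := fun _ => rfl
  have hαx : proj x α ≤ x := by
    have := mul_le_mul_of_nonneg_left (P_head_false hx0.le hx1 hadm.1) h1x.le
    rw [hmul]
    calc _ ≤ _ := this
      _ = x := by field_simp
  refine ⟨max (proj x α) (1 - x), ?_, ?_, ?_⟩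
  · rw [← hxdef]; exact le_max_right _ _
  · rw [← hxdef]; exact max_le hαx (by linarith)
  set p := max (proj x α) (1 - x) with hp
  have hpβ : p ≤ proj x β := by
    refine max_le ?_ ?_
    · rw [hmul, hmul]; exact mul_le_mul_of_nonneg_left hgap.le h1x.le
    · rw [hmul]
      exact le_mul_of_one_le_right h1x.le (P_head_true hx0.le hx1 hadm.2.2.1)
  intro ω hω
  have hωX := addrPlus_subset α β hω
  have hhead : ∀ n, (shift^[n] ω) 0 = ω n := fun n => by simp [shift_iter]
  have hfalse : ∀ n, ω n = false → proj x (shift^[n] ω) < p := by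
    intro n hn
    have hn0 : (shift^[n] ω) 0 = false := (hhead n).trans hn
    have hlt : lexLt (shift^[n] ω) α := by
      have hnle : ¬ lexLe α (shift^[n] ω) := fun hle =>
        hω n ⟨hle, lexLt_of_head hn0 hadm.2.2.1⟩
      rcases lexLt_or_of_ne (fun he => hnle (Or.inl he) : α ≠ shift^[n] ω) with hl | hl
      · exact absurd (Or.inr hl) hnle
      · exact hl
    refine lt_of_lt_of_le ?_ (le_max_left _ _)
    rw [hmul, hmul]
    exact mul_lt_mul_of_pos_left
      (hsep.strictMono hadm hx0 hx1 hgap (gapSet_shift hωX n) (alpha_mem hadm) hlt) h1x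
  have htrue : ∀ n, ω n = true → p ≤ proj x (shift^[n] ω) := by
    intro n hn
    refine hpβ.trans ?_
    rw [hmul, hmul]
    exact mul_le_mul_of_nonneg_left
      (hsep.beta_le hadm hx0.le hx1 (gapSet_shift hωX n) ((hhead n).trans hn)) h1x.le
  have hiter : ∀ n, (fPlus a p)^[n] (proj x ω) = proj x (shift^[n] ω) := by
    intro n
    induction n with
    | zero => rfl
    | succ n ih =>
      rw [Function.iterate_succ_apply', Function.iterate_succ_apply', ih]
      have hsucc := P_succ hx0.le hx1 (shift^[n] ω)
      rw [hhead n] at hsucc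
      rcases hn : ω n with _ | _
      · rw [fPlus, if_pos (hfalse n hn), hmul, hmul, hsucc, hn]
        simp only [b2r, Bool.false_eq_true, if_false]
        linear_combination (1 - x) * P x (shift (shift^[n] ω)) * hax
      · rw [fPlus, if_neg (not_lt.mpr (htrue n hn)), hmul, hmul, hsucc, hn]
        simp only [b2r, if_true]
        linear_combination ((1 - x) * P x (shift (shift^[n] ω)) - 1) * hax
  refine ⟨proj x ω, ⟨?_, ?_⟩, ?_⟩
  · rw [hmul]; exact mul_nonneg h1x.le (P_nonneg hx0.le ω)
  · rw [hmul]
    calc _ ≤ (1 - x) * (1 - x)⁻¹ := mul_le_mul_of_nonneg_left (P_le hx0.le hx1 ω) h1x.le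
      _ = 1 := mul_inv_cancel₀ h1x.ne'
  · funext n
    simp only [itinPlus, hiter n]
    rcases hn : ω n with _ | _
    · simpa using hfalse n hn
    · simpa using htrue n hn
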